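/- Suppose φ ∈ C^∞(ℝ) is real-valued and a ∈ C_0^∞(ℐ) for an open interval ℐ ⊂ (−1/2,1/2). Suppose for some 0 < δ < 1/2 that λ^{−δ/2} ≤ |φ''(t)| for t ∈ ℐ, and that for 0 ≤ j ≤ N = ⌈4δ^{−1}⌉ one has |∂_t^j a(t)| ≤ C_j λ^{j/2} and |∂_t^j φ'(t)| ≤ λ^{δ/2} for t ∈ ℐ. Then |∫ e^{iλφ(t)} a(t) dt| ≤ C λ^{−1/2+2δ}, where C depends only on δ and the constants C_j, j ≤ ⌈4δ^{−1}⌉. -/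

import Mathlib

open MeasureTheory
open scoped ContDiff Topology

/-- pointwise symbol estimate at `t`. -/
def SymAt (X : ℝ) (m : ℕ) (M : ℝ) (f : ℝ → ℂ) (t : ℝ) : Prop :=
  ContDiffAt ℝ ∞ f t ∧ ∀ j ≤ m, ‖iteratedDeriv j f t‖ ≤ M * X ^ j

lemma contDiffAt_deriv_infty {f : ℝ → ℂ} {t : ℝ} (h : ContDiffAt ℝ ∞ f t) :
    ContDiffAt ℝ ∞ (deriv f) t := by
  have h1 : ContDiffAt ℝ ∞ (fderiv ℝ f) t := h.fderiv_right (by simp)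
  have h2 : deriv f = fun x => fderiv ℝ f x 1 := by
    funext x; simp
  rw [h2]
  exact h1.clm_apply contDiffAt_const

lemma SymAt.mul {X : ℝ} (hX : 0 ≤ X) {m : ℕ} {A B : ℝ} (hA : 0 ≤ A)
    (hB : 0 ≤ B) {f g : ℝ → ℂ} {t : ℝ} (hf : SymAt X m A f t) (hg : SymAt X m B g t) :
    SymAt X m (2 ^ m * (A * B)) (fun x => f x * g x) t := by
  refine ⟨hf.1.mul hg.1, fun j hj => ?_⟩
  have e := iteratedDeriv_fun_mul (n := j) (f := f) (g := g) (x := t)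
    (hf.1.of_le (by exact_mod_cast le_top)) (hg.1.of_le (by exact_mod_cast le_top))
  rw [e]
  calc _ ≤ ∑ i ∈ Finset.range (j + 1), (j.choose i : ℝ) * (A * B * X ^ j) := by
        refine norm_sum_le_of_le _ fun i hi => ?_
        have hi' : i ≤ j := by simpa [Nat.lt_succ_iff] using hi
        rw [norm_mul, norm_mul, Complex.norm_natCast, mul_assoc]
        refine mul_le_mul_of_nonneg_left ?_ (by positivity)
        calc _ ≤ (A * X ^ i) * (B * X ^ (j - i)) :=
              mul_le_mul (hf.2 i (hi'.trans hj)) (hg.2 _ ((Nat.sub_le _ _).trans hj))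
                (norm_nonneg _) (by positivity)
          _ = A * B * (X ^ i * X ^ (j - i)) := by ring
          _ = _ := by rw [← pow_add, Nat.add_sub_cancel' hi']
    _ = 2 ^ j * (A * B * X ^ j) := by
        rw [← Finset.sum_mul]
        congr 1
        exact_mod_cast Nat.sum_range_choose j
    _ ≤ 2 ^ m * (A * B * X ^ j) := by
        refine mul_le_mul_of_nonneg_right ?_ (by positivity)
        exact pow_le_pow_right₀ (by norm_num) hj
    _ = _ := by ring

lemma SymAt.const_mul {X : ℝ} {m : ℕ} {A : ℝ} {f : ℝ → ℂ} {t : ℝ} (c : ℂ)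
    (hf : SymAt X m A f t) : SymAt X m (‖c‖ * A) (fun x => c * f x) t := by
  refine ⟨contDiffAt_const.mul hf.1, fun j hj => ?_⟩
  rw [iteratedDeriv_const_mul_field, norm_mul, mul_assoc]
  exact mul_le_mul_of_nonneg_left (hf.2 j hj) (norm_nonneg _)

lemma SymAt.deriv {X : ℝ} {m : ℕ} {A : ℝ} {f : ℝ → ℂ} {t : ℝ}
    (hf : SymAt X (m + 1) A f t) : SymAt X m (A * X) (deriv f) t := by
  refine ⟨contDiffAt_deriv_infty hf.1, fun j hj => ?_⟩
  rw [← iteratedDeriv_succ']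
  calc _ ≤ _ := hf.2 (j + 1) (by omega)
    _ = _ := by ring

lemma SymAt.mono {X : ℝ} (hX : 0 ≤ X) {m k : ℕ} {A B : ℝ} {f : ℝ → ℂ} {t : ℝ}
    (hf : SymAt X m A f t) (hk : k ≤ m) (hAB : A ≤ B) : SymAt X k B f t :=
  ⟨hf.1, fun j hj => (hf.2 j (hj.trans hk)).trans
    (mul_le_mul_of_nonneg_right hAB (by positivity))⟩

lemma symAt_inv (k : ℕ) : ∃ B : ℝ, 0 ≤ B ∧ ∀ (X L r : ℝ) (h : ℝ → ℂ) (t : ℝ), 1 ≤ X → 0 < r →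
    0 ≤ L → L ≤ X * r → r ≤ ‖h t‖ → ContDiffAt ℝ ∞ h t →
    (∀ j ≤ k, ‖iteratedDeriv j h t‖ ≤ L) → SymAt X k (B / r) (fun x => (h x)⁻¹) t := by
  induction k with
  | zero =>
    refine ⟨1, zero_le_one, fun X L r h t hX hr hL hLX hrh hh hj => ⟨?_, ?_⟩⟩
    · exact hh.inv (by rw [← norm_pos_iff]; linarith)
    · intro j hj
      obtain rfl : j = 0 := by omega
      simp only [iteratedDeriv_zero, norm_inv, pow_zero, mul_one, one_div]
      exact inv_anti₀ hr hrh
  | succ k ih =>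
    obtain ⟨B, hB, H⟩ := ih
    refine ⟨B + 2 ^ k * (2 ^ k * (B * B)), by positivity,
      fun X L r h t hX hr hL hLX hrh hh hj => ?_⟩
    have hX0 : 0 ≤ X := by linarith
    have h0 := H X L r h t hX hr hL hLX hrh hh (fun j hj' => hj j (by omega))
    have hd : SymAt X k L (deriv h) t := by
      refine ⟨contDiffAt_deriv_infty hh, fun j hj' => ?_⟩
      rw [← iteratedDeriv_succ']
      exact (hj _ (by omega)).trans (le_mul_of_one_le_right hL (one_le_pow₀ hX))
    have hsq := (hd.mul hX0 hL (by positivity)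
      (h0.mul hX0 (div_nonneg hB hr.le) (div_nonneg hB hr.le) h0)).const_mul (-1)
    refine ⟨h0.1, fun j hj' => ?_⟩
    rcases j with _ | j
    · refine (h0.2 0 (by omega)).trans ?_
      gcongr
      have : 0 ≤ 2 ^ k * (2 ^ k * (B * B)) := by positivity
      linarith
    · have hne : ∀ᶠ x in 𝓝 t, h x ≠ 0 :=
        hh.continuousAt.eventually_ne (by rw [← norm_pos_iff]; linarith)
      have hdf : ∀ᶠ x in 𝓝 t, DifferentiableAt ℝ h x := by
        have := (hh.of_le (m := 1) (by exact_mod_cast le_top)).eventually (by simp)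
        filter_upwards [this] with x hx using hx.differentiableAt (by simp)
      have hev : deriv (fun x => (h x)⁻¹) =ᶠ[𝓝 t]
          fun x => -1 * (deriv h x * ((h x)⁻¹ * (h x)⁻¹)) := by
        filter_upwards [hne, hdf] with x hx hx'
        rw [(hx'.hasDerivAt.fun_inv hx).deriv]
        field_simp
      rw [iteratedDeriv_succ', hev.iteratedDeriv_eq]
      refine (hsq.2 j (by omega)).trans ?_
      simp only [norm_neg, norm_one, one_mul]
      calc 2 ^ k * (L * (2 ^ k * (B / r * (B / r)))) * X ^ j
          ≤ 2 ^ k * ((X * r) * (2 ^ k * (B / r * (B / r)))) * X ^ j := by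
            have := div_nonneg hB hr.le
            gcongr
        _ = (2 ^ k * (2 ^ k * (B * B))) / r * X ^ (j + 1) := by
            field_simp
            ring
        _ ≤ _ := by
            gcongr
            linarith

lemma far_bound (k : ℕ) (G : ℝ) (hG : 0 ≤ G) : ∃ C : ℝ, 0 ≤ C ∧
    ∀ (lam r X c d : ℝ) (φ : ℝ → ℝ), 0 < lam → 0 < r → 0 ≤ X → X / (lam * r) ≤ 1 →
    c ≤ d → d - c ≤ 1 → ContDiff ℝ ∞ φ →
    (∀ t ∈ Set.Icc c d, deriv φ t ≠ 0 ∧ SymAt X k (G / r) (fun x => ((deriv φ x : ℝ) : ℂ)⁻¹) t) →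
    ∀ (M : ℝ) (f : ℝ → ℂ), 0 ≤ M → (∀ t ∈ Set.Icc c d, SymAt X k M f t) →
    ‖∫ t in c..d, Complex.exp (Complex.I * lam * φ t) * f t‖ ≤
      C * M * (1 / (lam * r) + (X / (lam * r)) ^ k) := by
  have hE1 : ∀ (lam x : ℝ), ‖Complex.exp (Complex.I * lam * x)‖ = 1 := by
    intro lam x
    have : Complex.I * lam * x = ((lam * x : ℝ) : ℂ) * Complex.I := by push_cast; ring
    rw [this, Complex.norm_exp_ofReal_mul_I]
  induction k with
  | zero =>
    refine ⟨1, zero_le_one, fun lam r X c d φ hl hr hX hε hcd hcd1 hφ hg M f hM hf => ?_⟩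
    have : ‖∫ t in c..d, Complex.exp (Complex.I * lam * φ t) * f t‖ ≤ M * |d - c| := by
      refine intervalIntegral.norm_integral_le_of_norm_le_const fun t ht => ?_
      rw [Set.uIoc_of_le hcd] at ht
      rw [norm_mul, hE1, one_mul]
      simpa using (hf t ⟨ht.1.le, ht.2⟩).2 0 le_rfl
    rw [abs_of_nonneg (by linarith)] at this
    refine this.trans ?_
    have h1 : 0 ≤ 1 / (lam * r) := by positivity
    simp only [pow_zero, one_mul]
    refine mul_le_mul_of_nonneg_left ?_ hM
    linarith
  | succ k ih =>
    obtain ⟨C, hC, H⟩ := ih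
    refine ⟨2 * (2 ^ (k + 1) * G) + C * (2 ^ (k + 1) * G), by positivity,
      fun lam r X c d φ hl hr hX hε hcd hcd1 hφ hg M f hM hf => ?_⟩
    set w : ℂ := (Complex.I * lam)⁻¹ with hw
    have hw0 : Complex.I * lam ≠ 0 := by
      simp [hl.ne']
    have hwn : ‖w‖ = 1 / lam := by
      simp [hw, abs_of_pos hl]
    set g : ℝ → ℂ := fun x => ((deriv φ x : ℝ) : ℂ)⁻¹ with hgdef
    set v : ℝ → ℂ := fun x => w * (g x * f x) with hv
    have hGr : 0 ≤ G / r := by positivity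
    have hvS : ∀ t ∈ Set.Icc c d, SymAt X (k + 1) (2 ^ (k + 1) * G * M / (lam * r)) v t := by
      intro t ht
      have := ((hg t ht).2.mul hX hGr hM (hf t ht)).const_mul w
      rw [hwn] at this
      refine this.mono hX le_rfl (le_of_eq ?_)
      field_simp
    have huIcc : Set.uIcc c d = Set.Icc c d := Set.uIcc_of_le hcd
    set E : ℝ → ℂ := fun t => Complex.exp (Complex.I * lam * φ t) with hE
    have hφd : Continuous (deriv φ) := hφ.continuous_deriv (by exact_mod_cast le_top)
    have hEd : ∀ t, HasDerivAt E (E t * (Complex.I * lam * (deriv φ t : ℝ))) t := by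
      intro t
      have h1 : HasDerivAt φ (deriv φ t) t :=
        (hφ.differentiable (by simp) t).hasDerivAt
      exact (h1.ofReal_comp.const_mul (Complex.I * lam)).cexp
    have hφc := hφ.continuous
    have hEc : Continuous E := by
      rw [hE]; fun_prop
    have ibp := intervalIntegral.integral_mul_deriv_eq_deriv_mul (a := c) (b := d) (u := v) (v := E)
      (u' := deriv v) (v' := fun t => E t * (Complex.I * lam * (deriv φ t : ℝ)))
      (fun t ht => ((hvS t (huIcc ▸ ht)).1.differentiableAt (by simp)).hasDerivAt)
      (fun t _ => hEd t)
      (ContinuousOn.intervalIntegrable fun t ht =>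
        (contDiffAt_deriv_infty (hvS t (huIcc ▸ ht)).1).continuousAt.continuousWithinAt)
      (Continuous.intervalIntegrable (by fun_prop) _ _)
    have e1 : ∫ t in c..d, E t * f t =
        ∫ t in c..d, v t * (E t * (Complex.I * lam * (deriv φ t : ℝ))) := by
      refine intervalIntegral.integral_congr fun t ht => ?_
      have h1 : ((deriv φ t : ℝ) : ℂ) ≠ 0 := by
        exact_mod_cast (hg t (huIcc ▸ ht)).1
      simp only [hv, hgdef, hw]
      have hl' : (lam : ℂ) ≠ 0 := by exact_mod_cast hl.ne'
      field_simp
    have hK := H lam r X c d φ hl hr hX hε hcd hcd1 hφ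
      (fun t ht => ⟨(hg t ht).1, (hg t ht).2.mono hX (by omega) le_rfl⟩)
      (2 ^ (k + 1) * G * M / (lam * r) * X) (deriv v) (by positivity)
      (fun t ht => (hvS t ht).deriv)
    have e2 : ∫ t in c..d, deriv v t * E t = ∫ t in c..d, E t * deriv v t := by
      congr 1; funext t; ring
    have hvb : ∀ t ∈ Set.Icc c d, ‖v t * E t‖ ≤ 2 ^ (k + 1) * G * M / (lam * r) := by
      intro t ht
      rw [norm_mul, hE1, mul_one]
      simpa using (hvS t ht).2 0 (by omega)
    change ‖∫ t in c..d, E t * f t‖ ≤ _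
    rw [e1, ibp, e2]
    have t1 := norm_sub_le (v d * E d - v c * E c) (∫ t in c..d, E t * deriv v t)
    have t2 := norm_sub_le (v d * E d) (v c * E c)
    have b1 := hvb d ⟨hcd, le_rfl⟩
    have b2 := hvb c ⟨le_rfl, hcd⟩
    have hK' : ‖∫ t in c..d, E t * deriv v t‖ ≤ _ := hK
    refine t1.trans ?_
    set ε := X / (lam * r) with hεd
    set s := 1 / (lam * r) with hs
    have hs0 : 0 ≤ s := by positivity
    have hε0 : 0 ≤ ε := by positivity
    set Q := 2 ^ (k + 1) * G with hQ
    have hQ0 : 0 ≤ Q := by positivity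
    have r1 : Q * M / (lam * r) = Q * M * s := by rw [hs]; ring
    have r2 : Q * M / (lam * r) * X = Q * M * ε := by rw [hεd]; ring
    rw [r2] at hK'
    rw [r1] at b1 b2
    have r3 : ε * (s + ε ^ k) ≤ s + ε ^ (k + 1) := by
      rw [pow_succ]
      nlinarith
    have r4 : C * (Q * M * ε) * (s + ε ^ k) ≤ C * Q * M * (s + ε ^ (k + 1)) := by
      calc _ = C * Q * M * (ε * (s + ε ^ k)) := by ring
        _ ≤ _ := by gcongr
    have r5 : 0 ≤ Q * M * ε ^ (k + 1) := by positivity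
    nlinarith

lemma iteratedDeriv_ofReal_comp {f : ℝ → ℝ} (hf : ContDiff ℝ ∞ f) (j : ℕ) :
    iteratedDeriv j (fun x => ((f x : ℝ) : ℂ)) = fun x => ((iteratedDeriv j f x : ℝ) : ℂ) := by
  induction j with
  | zero => simp
  | succ j ih =>
    rw [iteratedDeriv_succ, ih, iteratedDeriv_succ]
    funext x
    have : DifferentiableAt ℝ (iteratedDeriv j f) x :=
      (hf.differentiable_iteratedDeriv j (by exact_mod_cast WithTop.coe_lt_top _)) x
    exact this.hasDerivAt.ofReal_comp.deriv

lemma stationary_phase_split (lam r R L Q M c d : ℝ) (hr : 0 < r)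
    (φ : ℝ → ℝ) (a : ℝ → ℂ) (hcd : c ≤ d) (hφ : ContDiff ℝ ∞ φ) (ha : Continuous a)
    (hR : 0 ≤ R) (hL : 0 < L) (hM : 0 ≤ M)
    (h2 : ∀ t ∈ Set.Icc c d, L⁻¹ ≤ |deriv (deriv φ) t|)
    (haM : ∀ t ∈ Set.Icc c d, ‖a t‖ ≤ M)
    (hQ : 2 * M * L * r ≤ Q)
    (hfar : ∀ u v : ℝ, c ≤ u → u ≤ v → v ≤ d → (∀ t ∈ Set.Icc u v, r ≤ |deriv φ t|) →
      ‖∫ t in u..v, Complex.exp (Complex.I * lam * φ t) * a t‖ ≤ R) :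
    ‖∫ t in c..d, Complex.exp (Complex.I * lam * φ t) * a t‖ ≤ 2 * R + Q := by
  have hE1 : ∀ (x : ℝ), ‖Complex.exp (Complex.I * lam * x)‖ = 1 := by
    intro x
    have : Complex.I * lam * x = ((lam * x : ℝ) : ℂ) * Complex.I := by push_cast; ring
    rw [this, Complex.norm_exp_ofReal_mul_I]
  have hQ0 : 0 ≤ Q := le_trans (by positivity) hQ
  have hφd : Continuous (deriv φ) := hφ.continuous_deriv (by exact_mod_cast le_top)
  have hφ' : ContDiff ℝ ∞ (deriv φ) := by
    have := hφ.iterate_deriv 1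
    simpa using this
  set K : Set ℝ := Set.Icc c d ∩ {t | |deriv φ t| ≤ r} with hK
  have hKc : IsCompact K :=
    isCompact_Icc.inter_right (isClosed_le hφd.abs continuous_const)
  rcases K.eq_empty_or_nonempty with hKe | hKn
  · have := hfar c d le_rfl hcd le_rfl (fun t ht => by
      by_contra hlt
      have : t ∈ K := ⟨ht, (not_le.mp hlt).le⟩
      rw [hKe] at this
      exact this)
    linarith
  obtain ⟨u, huK, hu⟩ := hKc.exists_isLeast hKn
  obtain ⟨v, hvK, hv⟩ := hKc.exists_isGreatest hKn
  have huv : u ≤ v := hu hvK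
  have hcu := huK.1.1
  have hvd := hvK.1.2
  have hclosed : IsClosed {t | r ≤ |deriv φ t|} := isClosed_le continuous_const hφd.abs
  have hI : ∀ x y : ℝ, IntervalIntegrable
      (fun t => Complex.exp (Complex.I * lam * φ t) * a t) volume x y := by
    intro x y
    have := hφ.continuous
    exact Continuous.intervalIntegrable (by fun_prop) _ _
  have p1 : ‖∫ t in c..u, Complex.exp (Complex.I * lam * φ t) * a t‖ ≤ R := by
    rcases hcu.eq_or_lt with h | h
    · rw [h]; simpa using hR
    · refine hfar c u le_rfl hcu (huv.trans hvd) ?_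
      have hs : Set.Ico c u ⊆ {t | r ≤ |deriv φ t|} := by
        intro t ht
        by_contra hlt
        rw [Set.mem_setOf_eq] at hlt
        have : t ∈ K := ⟨⟨ht.1, ht.2.le.trans (huv.trans hvd)⟩, (not_le.mp hlt).le⟩
        exact absurd (hu this) (not_le.mpr ht.2)
      have := closure_minimal hs hclosed
      rw [closure_Ico h.ne] at this
      exact this
  have p3 : ‖∫ t in v..d, Complex.exp (Complex.I * lam * φ t) * a t‖ ≤ R := by
    rcases hvd.eq_or_lt with h | h
    · rw [h]; simpa using hR
    · refine hfar v d (hcu.trans huv) hvd le_rfl ?_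
      have hs : Set.Ioc v d ⊆ {t | r ≤ |deriv φ t|} := by
        intro t ht
        by_contra hlt
        rw [Set.mem_setOf_eq] at hlt
        have : t ∈ K := ⟨⟨(hcu.trans huv).trans ht.1.le, ht.2⟩, (not_le.mp hlt).le⟩
        exact absurd (hv this) (not_le.mpr ht.1)
      have := closure_minimal hs hclosed
      rw [closure_Ioc h.ne] at this
      exact this
  have p2 : ‖∫ t in u..v, Complex.exp (Complex.I * lam * φ t) * a t‖ ≤ Q := by
    have hlen : v - u ≤ 2 * L * r := by
      rcases huv.eq_or_lt with h | h
      · rw [h]; simp; positivity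
      · obtain ⟨ξ, hξ, e⟩ := exists_deriv_eq_slope (deriv φ) h hφd.continuousOn
          (hφ'.differentiable (by simp)).differentiableOn
        have h3 := h2 ξ ⟨hcu.trans hξ.1.le, hξ.2.le.trans hvd⟩
        have hvu : 0 < v - u := by linarith
        rw [e, abs_div, abs_of_pos hvu, le_div_iff₀ hvu] at h3
        have h4 : |deriv φ v - deriv φ u| ≤ 2 * r := by
          have a1 : |deriv φ v| ≤ r := hvK.2
          have a2 : |deriv φ u| ≤ r := huK.2
          have := abs_sub (deriv φ v) (deriv φ u)
          linarith
        have h5 : L⁻¹ * (v - u) ≤ 2 * r := h3.trans h4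
        rw [inv_mul_le_iff₀ hL] at h5
        linarith
    have : ‖∫ t in u..v, Complex.exp (Complex.I * lam * φ t) * a t‖ ≤ M * |v - u| := by
      refine intervalIntegral.norm_integral_le_of_norm_le_const fun t ht => ?_
      rw [Set.uIoc_of_le huv] at ht
      rw [norm_mul, hE1, one_mul]
      exact haM t ⟨hcu.trans ht.1.le, ht.2.trans hvd⟩
    rw [abs_of_nonneg (by linarith)] at this
    have := this.trans (mul_le_mul_of_nonneg_left hlen hM)
    linarith
  rw [← intervalIntegral.integral_add_adjacent_intervals (hI c u) (hI u d),
    ← intervalIntegral.integral_add_adjacent_intervals (hI u v) (hI v d)]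
  refine (norm_add_le _ _).trans ?_
  have := norm_add_le (∫ t in u..v, Complex.exp (Complex.I * lam * φ t) * a t)
    (∫ t in v..d, Complex.exp (Complex.I * lam * φ t) * a t)
  linarith

/-- **Combined stationary phase estimate** (Proposition 4.3 of Sogge–Xi–Zhang).
Suppose `φ ∈ C^∞(ℝ)` is real valued, `a ∈ C_0^∞(ℐ)` for an open interval
`ℐ = (p,q) ⊂ (-1/2,1/2)`, `0 < δ < 1/2`, `λ^{-δ/2} ≤ |φ''|` on `ℐ`, and for
`0 ≤ j ≤ ⌈4/δ⌉` one has `|∂_t^j a| ≤ C_j λ^{j/2}` and `|∂_t^j φ'| ≤ λ^{δ/2}`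
on `ℐ`.  Then `|∫ e^{iλφ(t)} a(t) dt| ≤ C λ^{-1/2+2δ}` with `C` depending only on
`δ` and the constants `C_j`. -/
theorem stationary_phase_combined_bound
    (δ : ℝ) (hδ0 : 0 < δ) (hδ1 : δ < 1 / 2) (Cj : ℕ → ℝ) :
    ∃ C : ℝ, ∀ lam : ℝ, 1 ≤ lam →
      ∀ (φ : ℝ → ℝ) (a : ℝ → ℂ) (p q : ℝ),
        Set.Ioo p q ⊆ Set.Ioo (-(1 / 2) : ℝ) (1 / 2) →
        ContDiff ℝ (⊤ : ℕ∞) φ →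
        ContDiff ℝ (⊤ : ℕ∞) a →
        tsupport a ⊆ Set.Ioo p q →
        (∀ t ∈ Set.Ioo p q, lam ^ (-(δ / 2) : ℝ) ≤ |deriv (deriv φ) t|) →
        (∀ j : ℕ, j ≤ ⌈4 / δ⌉₊ → ∀ t ∈ Set.Ioo p q,
          ‖iteratedDeriv j a t‖ ≤ Cj j * lam ^ ((j : ℝ) / 2)) →
        (∀ j : ℕ, j ≤ ⌈4 / δ⌉₊ → ∀ t ∈ Set.Ioo p q,
          |iteratedDeriv j (deriv φ) t| ≤ lam ^ (δ / 2 : ℝ)) →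
        ‖∫ t : ℝ, Complex.exp (Complex.I * lam * φ t) * a t‖
          ≤ C * lam ^ (-(1 / 2) + 2 * δ : ℝ) := by
  set N := ⌈4 / δ⌉₊ with hN
  obtain ⟨B, hB, hinv⟩ := symAt_inv N
  obtain ⟨F, hF, hfarb⟩ := far_bound N B hB
  set M : ℝ := ∑ j ∈ Finset.range (N + 1), |Cj j| with hMdef
  have hM : 0 ≤ M := Finset.sum_nonneg fun _ _ => abs_nonneg _
  have hCM : ∀ j ≤ N, Cj j ≤ M := fun j hj =>
    (le_abs_self _).trans (Finset.single_le_sum (f := fun j => |Cj j|)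
      (fun _ _ => abs_nonneg _) (Finset.mem_range.mpr (by omega)))
  refine ⟨2 * (F * M * 2) + 2 * M, ?_⟩
  intro lam hlam φ a p q hpq hφ ha hsupp h2 haj hφj
  have hl : 0 < lam := by linarith
  have hpow : 0 < lam ^ (-(1 / 2) + 2 * δ : ℝ) := Real.rpow_pos_of_pos hl _
  rcases (tsupport a).eq_empty_or_nonempty with he | hne
  · have : a = 0 := tsupport_eq_empty_iff.mp he
    subst this
    simp only [Pi.zero_apply, mul_zero, integral_zero, norm_zero]
    positivity
  have hbdd : Bornology.IsBounded (tsupport a) := (Metric.isBounded_Ioo p q).subset hsupp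
  have hcomp : IsCompact (tsupport a) :=
    Metric.isCompact_of_isClosed_isBounded (isClosed_tsupport a) hbdd
  obtain ⟨c, hcS, hc⟩ := hcomp.exists_isLeast hne
  obtain ⟨d, hdS, hd⟩ := hcomp.exists_isGreatest hne
  have hcd : c ≤ d := hc hdS
  have hpc := (hsupp hcS).1
  have hdq := (hsupp hdS).2
  have hsub : Set.Icc c d ⊆ Set.Ioo p q := fun t ht =>
    ⟨hpc.trans_le ht.1, ht.2.trans_lt hdq⟩
  have hlen : d - c ≤ 1 := by
    have h1 := (hpq (hsupp hcS)).1
    have h2 := (hpq (hsupp hdS)).2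
    linarith
  have hint : ∫ t : ℝ, Complex.exp (Complex.I * lam * φ t) * a t =
      ∫ t in c..d, Complex.exp (Complex.I * lam * φ t) * a t := by
    rw [intervalIntegral.integral_of_le hcd, ← integral_Icc_eq_integral_Ioc]
    symm
    refine setIntegral_eq_integral_of_forall_compl_eq_zero fun t ht => ?_
    have : t ∉ tsupport a := fun h => ht ⟨hc h, hd h⟩
    rw [image_eq_zero_of_notMem_tsupport this, mul_zero]
  rw [hint]
  set r : ℝ := lam ^ (-(1 / 2) + 3 * δ / 2 : ℝ) with hr
  set X : ℝ := lam ^ (1 / 2 : ℝ) with hX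
  set L : ℝ := lam ^ (δ / 2 : ℝ) with hL
  set T : ℝ := lam ^ (-(1 / 2) + 2 * δ : ℝ) with hT
  have hr0 : 0 < r := Real.rpow_pos_of_pos hl _
  have hX1 : 1 ≤ X := Real.one_le_rpow hlam (by norm_num)
  have hL0 : 0 < L := Real.rpow_pos_of_pos hl _
  have hLX : L ≤ X * r := by
    rw [hX, hr, hL, ← Real.rpow_add hl]
    exact Real.rpow_le_rpow_of_exponent_le hlam (by linarith)
  have hlr : lam * r = lam ^ (1 / 2 + 3 * δ / 2 : ℝ) := by
    rw [hr]
    nth_rewrite 1 [← Real.rpow_one lam]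
    rw [← Real.rpow_add hl]
    congr 1; ring
  have hs : 1 / (lam * r) ≤ T := by
    rw [hlr, one_div, ← Real.rpow_neg hl.le]
    exact Real.rpow_le_rpow_of_exponent_le hlam (by linarith)
  have heps : X / (lam * r) = lam ^ (-(3 * δ / 2) : ℝ) := by
    rw [hlr, hX, ← Real.rpow_sub hl]
    congr 1; ring
  have heps1 : X / (lam * r) ≤ 1 := by
    rw [heps]
    exact Real.rpow_le_one_of_one_le_of_nonpos hlam (by linarith)
  have hNδ : 4 ≤ N * δ := by
    have := Nat.le_ceil (4 / δ)
    rwa [div_le_iff₀ hδ0] at this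
  have hepsN : (X / (lam * r)) ^ N ≤ T := by
    rw [heps, ← Real.rpow_natCast, ← Real.rpow_mul hl.le]
    exact Real.rpow_le_rpow_of_exponent_le hlam (by nlinarith)
  have hXj : ∀ j : ℕ, lam ^ ((j : ℝ) / 2) = X ^ j := by
    intro j
    rw [hX, ← Real.rpow_natCast, ← Real.rpow_mul hl.le]
    congr 1; ring
  have hφ' : ContDiff ℝ ∞ (deriv φ) := by
    have := hφ.iterate_deriv 1
    simpa using this
  have haS : ∀ t ∈ Set.Icc c d, SymAt X N M a t := by
    intro t ht
    refine ⟨ha.contDiffAt, fun j hj => ?_⟩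
    have := haj j hj t (hsub ht)
    rw [hXj] at this
    refine this.trans (mul_le_mul_of_nonneg_right (hCM j hj) (by positivity))
  have hfar : ∀ u v : ℝ, c ≤ u → u ≤ v → v ≤ d → (∀ t ∈ Set.Icc u v, r ≤ |deriv φ t|) →
      ‖∫ t in u..v, Complex.exp (Complex.I * lam * φ t) * a t‖ ≤ F * M * 2 * T := by
    intro u v hcu huv hvd hrt
    have hin : ∀ t ∈ Set.Icc u v, t ∈ Set.Icc c d := fun t ht =>
      ⟨hcu.trans ht.1, ht.2.trans hvd⟩
    have := hfarb lam r X u v φ hl hr0 (by linarith) heps1 huv (by linarith) hφ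
      (fun t ht => ⟨by
          have := hrt t ht
          exact abs_pos.mp (by linarith),
        hinv X L r (fun x => ((deriv φ x : ℝ) : ℂ)) t hX1 hr0 hL0.le hLX
          (by simpa using hrt t ht)
          (Complex.ofRealCLM.contDiff.comp hφ').contDiffAt
          (fun j hj => by
            rw [iteratedDeriv_ofReal_comp hφ', Complex.norm_real]
            exact hφj j hj t (hsub (hin t ht)))⟩)
      M a hM (fun t ht => haS t (hin t ht))
    refine this.trans ?_
    calc F * M * (1 / (lam * r) + (X / (lam * r)) ^ N) ≤ F * M * (T + T) := by gcongr
      _ = _ := by ring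
  have hLi : lam ^ (-(δ / 2) : ℝ) = L⁻¹ := Real.rpow_neg hl.le _
  have hLr : L * r = T := by
    rw [hL, hr, ← Real.rpow_add hl]
    congr 1; ring
  have := stationary_phase_split lam r (F * M * 2 * T) L (2 * M * T) M c d hr0 φ a hcd hφ
    ha.continuous (by positivity) hL0 hM
    (fun t ht => hLi ▸ h2 t (hsub ht))
    (fun t ht => by simpa using (haS t ht).2 0 (by omega))
    (by rw [mul_assoc, hLr]) hfar
  linarith
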